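/- (Stability of the VCS Controller in the underload regime) Let E>0, g_l>0, flexible loads F = {1,…,n_F} (n_F ≥ 1), inflexible loads I = {n_F+1,…,n} nonempty with P_{0,j} > 0 for all j ∈ I, P_{0,i} ≥ 0 for i ∈ F, κ_i > 0 for i ∈ F, and b > 0. Suppose g* ∈ ℝⁿ_{≥0} satisfies the load satisfaction equations v(g*)²·g*ᵢ = P_{0,i} for all i = 1,…,n, where v(g) = E·g_l/(Σⱼ gⱼ + g_l), together with ḡ* = Σᵢ g*ᵢ < g_l. Then there exists a₀ > 0 such that for every a ∈ (0, a₀), all eigenvalues of the VCS Jacobian J_SC(g*) (with parameters a, b, κ) have negative real part; i.e., the high-voltage load satisfaction equilibrium is locally asymptotically stable. -/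

import Mathlib

/-- The VCS Jacobian `J_SC(g)` as a matrix on the index type
`(Fin nF ⊕ Fin nI) ⊕ (Unit ⊕ Fin nF)`: the first block indexes the load conductances
(flexible then inflexible), `Unit` indexes the shared state `φ`, and the last block the
controller states `ĝ`. Here `ḡ = Σⱼ gⱼ`, `v = E·g_l/(ḡ+g_l)`, `ΔP̄ = v²·ḡ − Σⱼ P₀ⱼ`, and
`c = (v²·(g_l−ḡ)/(ḡ+g_l))² + ΔP̄·2v²·(ḡ−2g_l)/(ḡ+g_l)²`. -/
noncomputable def JSC (E gl a b : ℝ) {nF nI : ℕ}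
    (P0 : Fin nF ⊕ Fin nI → ℝ) (κ : Fin nF → ℝ) (g : Fin nF ⊕ Fin nI → ℝ) :
    Matrix ((Fin nF ⊕ Fin nI) ⊕ (Unit ⊕ Fin nF))
           ((Fin nF ⊕ Fin nI) ⊕ (Unit ⊕ Fin nF)) ℝ :=
  let gbar : ℝ := ∑ j, g j
  let v : ℝ := E * gl / (gbar + gl)
  let c : ℝ := (v ^ 2 * (gl - gbar) / (gbar + gl)) ^ 2 +
    (v ^ 2 * gbar - ∑ j, P0 j) * (2 * v ^ 2 * (gbar - 2 * gl) / (gbar + gl) ^ 2)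
  fun p q =>
    match p, q with
    | Sum.inl i, Sum.inl j =>
        (2 * v ^ 2 / (gbar + gl)) * g i +
          (match i, j with
           | Sum.inl i', Sum.inl j' => if i' = j' then -(v ^ 2 + b) else 0
           | Sum.inr i', Sum.inr j' => if i' = j' then -(v ^ 2) else 0
           | _, _ => 0)
    | Sum.inl (Sum.inl i'), Sum.inr (Sum.inl _) => -κ i'
    | Sum.inl (Sum.inr _), Sum.inr (Sum.inl _) => 0
    | Sum.inl (Sum.inl i'), Sum.inr (Sum.inr j') => if i' = j' then b else 0
    | Sum.inl (Sum.inr _), Sum.inr (Sum.inr _) => 0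
    | Sum.inr (Sum.inl _), Sum.inl _ => c
    | Sum.inr (Sum.inl _), Sum.inr _ => 0
    | Sum.inr (Sum.inr i'), Sum.inl (Sum.inl j') => if i' = j' then a else 0
    | Sum.inr (Sum.inr _), Sum.inl (Sum.inr _) => 0
    | Sum.inr (Sum.inr i'), Sum.inr (Sum.inr j') => if i' = j' then -a else 0
    | Sum.inr (Sum.inr _), Sum.inr (Sum.inl _) => 0

/-!
Summing the eigenvalue equations over the flexible and over the inflexible loads leaves a closed
system in the two sums and `φ`, so an eigenvalue is either a root of a real quartic or of one of
the stable factors `X + w`, `X + a`, `(X + w) (X + a) + b X`, where `w = v²`. The quartic is stable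
by the Routh–Hurwitz criterion: its Hurwitz determinant is a sum of positive terms as long as `a`
does not exceed the slope `v² (g_l - ḡ) / (ḡ + g_l)` of the total consumed power `v² ḡ` as a
function of `ḡ`, and this slope is positive exactly in the underload regime.
-/

section RouthHurwitz

/-- The third Hurwitz determinant of the quartic `X⁴ + p X³ + q X² + r X + s`; together with the
signs of the coefficients it decides whether all roots lie in the open left half-plane. -/
def quarticHurwitzDet (p q r s : ℝ) : ℝ :=
  p * q * r - r ^ 2 - p ^ 2 * s

variable {p q r s : ℝ}

theorem quarticHurwitzDet_eq_zero_of_imaginary_root {y : ℝ} (hy : y ≠ 0)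
    (hre : y ^ 4 - q * y ^ 2 + s = 0) (him : r * y - p * y ^ 3 = 0) :
    quarticHurwitzDet p q r s = 0 := by
  have hr : r = p * y ^ 2 := mul_right_cancel₀ hy (by linear_combination him)
  rw [quarticHurwitzDet, hr]
  linear_combination -p ^ 2 * hre

theorem pos_of_quarticHurwitzDet_pos (hp : 0 < p) (hr : 0 < r) (hs : 0 < s)
    (hdet : 0 < quarticHurwitzDet p q r s) : 0 < q := by
  have hpqr : 0 < p * r * q := by
    unfold quarticHurwitzDet at hdet
    have : 0 < r ^ 2 + p ^ 2 * s := by positivity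
    linarith
  exact pos_of_mul_pos_right hpqr (by positivity)

theorem four_mul_lt_sq_of_quarticHurwitzDet_pos (hdet : 0 < quarticHurwitzDet p q r s) :
    4 * s < q ^ 2 := by
  have : 0 < p ^ 2 * (q ^ 2 - 4 * s) := by
    unfold quarticHurwitzDet at hdet
    linarith [sq_nonneg (p * q - 2 * r)]
  exact sub_pos.1 (pos_of_mul_pos_right this (sq_nonneg p))

-- The arguments are the coefficients of the quartic in the variable `X - x`.
theorem quarticHurwitzDet_taylor_pos {x : ℝ} (hp : 0 < p) (hr : 0 < r) (hs : 0 < s)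
    (hdet : 0 < quarticHurwitzDet p q r s) (hx : 0 ≤ x) :
    0 < quarticHurwitzDet (4 * x + p) (6 * x ^ 2 + 3 * p * x + q)
      (4 * x ^ 3 + 3 * p * x ^ 2 + 2 * q * x + r)
      (x ^ 4 + p * x ^ 3 + q * x ^ 2 + r * x + s) := by
  have hq := pos_of_quarticHurwitzDet_pos hp hr hs hdet
  have hqs : 0 < q ^ 2 - 4 * s := sub_pos.2 (four_mul_lt_sq_of_quarticHurwitzDet_pos hdet)
  calc
    0 < quarticHurwitzDet p q r s + x * (2 * p ^ 2 * r + 2 * p * (q ^ 2 - 4 * s))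
        + x ^ 2 * (4 * (q ^ 2 - 4 * s) + 8 * p ^ 2 * q + 4 * p * r)
        + x ^ 3 * (32 * p * q + 8 * p ^ 3) + x ^ 4 * (32 * q + 48 * p ^ 2)
        + 96 * p * x ^ 5 + 64 * x ^ 6 := by positivity
    _ = _ := by unfold quarticHurwitzDet; ring

theorem re_neg_of_quartic_eq_zero {z : ℂ} (hp : 0 < p) (hr : 0 < r) (hs : 0 < s)
    (hdet : 0 < quarticHurwitzDet p q r s)
    (hz : z ^ 4 + p * z ^ 3 + q * z ^ 2 + r * z + s = 0) : z.re < 0 := by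
  by_contra! hx
  have hq := pos_of_quarticHurwitzDet_pos hp hr hs hdet
  have hre := congrArg Complex.re hz
  have him := congrArg Complex.im hz
  simp only [pow_succ, pow_zero, one_mul, Complex.add_re, Complex.add_im, Complex.mul_re,
    Complex.mul_im, Complex.ofReal_re, Complex.ofReal_im, Complex.zero_re, Complex.zero_im]
    at hre him
  generalize z.re = x at *
  generalize z.im = y at *
  obtain rfl | hy := eq_or_ne y 0
  · have : 0 < x ^ 4 + p * x ^ 3 + q * x ^ 2 + r * x + s := by positivity
    linarith
  · -- `y * I` is a root of the quartic translated by `x`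
    refine (quarticHurwitzDet_taylor_pos hp hr hs hdet hx).ne' <|
      quarticHurwitzDet_eq_zero_of_imaginary_root hy ?_ ?_
    · linear_combination hre
    · linear_combination him

theorem re_neg_of_quadratic_eq_zero {z : ℂ} (hp : 0 < p) (hq : 0 < q)
    (hz : z ^ 2 + p * z + q = 0) : z.re < 0 := by
  by_contra! hx
  have hre := congrArg Complex.re hz
  have him := congrArg Complex.im hz
  simp only [pow_two, Complex.add_re, Complex.add_im, Complex.mul_re, Complex.mul_im,
    Complex.ofReal_re, Complex.ofReal_im, Complex.zero_re, Complex.zero_im] at hre him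
  generalize z.re = x at *
  generalize z.im = y at *
  have hy : y = 0 := by
    have : y * (2 * x + p) = 0 := by linear_combination him
    exact (mul_eq_zero.1 this).resolve_right (by positivity)
  subst hy
  have : 0 < x ^ 2 + p * x + q := by positivity
  linarith

end RouthHurwitz

section CharacteristicEquation

variable {w α β b C a : ℝ}

theorem quarticHurwitzDet_closedLoop_pos (hα : 0 ≤ α) (hβ : 0 ≤ β) (hαβ : α + β < w) (hb : 0 ≤ b)
    (hC : 0 < C) (ha : 0 < a) (haβ : a * β ≤ w * (w - β)) :
    0 < quarticHurwitzDet (w + a + b + (w - α - β))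
      (w * a + (w + a) * (w - α - β) + b * (w - β) + C)
      (w * a * (w - α - β) + C * (w + a)) (C * w * a) := by
  have hw : 0 < w := by linarith
  have hd : 0 < w - α - β := by linarith
  have he : 0 < w - β := by linarith
  have : 0 ≤ w * (w - β) - a * β := sub_nonneg.2 haβ
  calc
    0 < w * a * (w - α - β) * (w * a * (w + a + b)
          + (w + a + b + (w - α - β)) * ((w + a) * (w - α - β) + b * (w - β)))
        + C * ((w - α - β) * (w + a) * (w ^ 2 + a ^ 2)
          + (b + (w - α - β)) * (w + a) ^ 2 * (w - α - β)
          + (w + a + b + (w - α - β)) * b * (w * (w - β) - a * β))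
        + C ^ 2 * ((w + a) * (b + (w - α - β))) := by positivity
    _ = _ := by unfold quarticHurwitzDet; ring

theorem re_neg_of_closedLoop_charEq {μ : ℂ} (hα : 0 ≤ α) (hβ : 0 ≤ β) (hαβ : α + β < w)
    (hb : 0 ≤ b) (hC : 0 < C) (ha : 0 < a) (haβ : a * β ≤ w * (w - β))
    (hμ : μ * ((μ + w) * (μ + a) + b * μ) * (μ + w - β) = (μ + w) * (μ + a) * (α * μ - C)) :
    μ.re < 0 := by
  have hw : 0 < w := by linarith
  have hd : 0 < w - α - β := by linarith
  refine re_neg_of_quartic_eq_zero (by positivity) (by positivity) (by positivity)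
    (quarticHurwitzDet_closedLoop_pos hα hβ hαβ hb hC ha haβ) ?_
  push_cast
  linear_combination hμ

end CharacteristicEquation

/-- The eigenvalue equations `J u = μ u` of the VCS closed loop, over any field and any finite sets
`F` and `I` of flexible and inflexible loads. The coefficients of the Jacobian at `g` are kept
abstract: `w` stands for `v²`, `k` for `2v² / (ḡ + g_l)`, and `c` for the gain of `φ`. The
coordinates of `u` are ordered as in `JSC`. -/
structure IsVCSMode {𝕜 F I : Type*} [Field 𝕜] [Fintype F] [Fintype I] (k w b c a : 𝕜)
    (g : F ⊕ I → 𝕜) (κ : F → 𝕜) (μ : 𝕜) (u : (F ⊕ I) ⊕ (Unit ⊕ F) → 𝕜) : Prop where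
  flexible (i : F) : k * g (.inl i) * ∑ j, u (.inl j) - (w + b) * u (.inl (.inl i))
    - κ i * u (.inr (.inl ())) + b * u (.inr (.inr i)) = μ * u (.inl (.inl i))
  inflexible (i : I) : k * g (.inr i) * ∑ j, u (.inl j) - w * u (.inl (.inr i))
    = μ * u (.inl (.inr i))
  shared : c * ∑ j, u (.inl j) = μ * u (.inr (.inl ()))
  controller (i : F) : a * (u (.inl (.inl i)) - u (.inr (.inr i))) = μ * u (.inr (.inr i))

namespace IsVCSMode

section Field

variable {𝕜 F I : Type*} [Field 𝕜] [Fintype F] [Fintype I] {k w b c a : 𝕜} {g : F ⊕ I → 𝕜}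
  {κ : F → 𝕜} {μ : 𝕜} {u : (F ⊕ I) ⊕ (Unit ⊕ F) → 𝕜}

theorem mul_flexible (h : IsVCSMode k w b c a g κ μ u) (i : F) :
    ((μ + w) * (μ + a) + b * μ) * u (.inl (.inl i)) =
      (μ + a) * (k * g (.inl i) * ∑ j, u (.inl j) - κ i * u (.inr (.inl ()))) := by
  linear_combination -(μ + a) * h.flexible i - b * h.controller i

theorem mul_inflexible (h : IsVCSMode k w b c a g κ μ u) (i : I) :
    (μ + w) * u (.inl (.inr i)) = k * g (.inr i) * ∑ j, u (.inl j) := by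
  linear_combination -h.inflexible i

theorem mul_sum_flexible (h : IsVCSMode k w b c a g κ μ u) :
    ((μ + w) * (μ + a) + b * μ) * ∑ i, u (.inl (.inl i)) =
      (μ + a) * (k * (∑ i, g (.inl i)) * ∑ j, u (.inl j) - (∑ i, κ i) * u (.inr (.inl ()))) := by
  simp only [Finset.mul_sum _ (fun i ↦ u (.inl (.inl i))), h.mul_flexible, ← Finset.mul_sum,
    Finset.sum_sub_distrib, ← Finset.sum_mul]

theorem mul_sum_inflexible (h : IsVCSMode k w b c a g κ μ u) :
    (μ + w) * ∑ i, u (.inl (.inr i)) = k * (∑ i, g (.inr i)) * ∑ j, u (.inl j) := by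
  simp only [Finset.mul_sum _ (fun i ↦ u (.inl (.inr i))), h.mul_inflexible, ← Finset.mul_sum,
    ← Finset.sum_mul]

theorem eq_zero_of_sum_eq_zero (h : IsVCSMode k w b c a g κ μ u) (hκ : ∑ i, κ i ≠ 0)
    (hw : μ + w ≠ 0) (ha : μ + a ≠ 0) (hD : (μ + w) * (μ + a) + b * μ ≠ 0)
    (hsum : ∑ j, u (.inl j) = 0) : u = 0 := by
  have hI (i : I) : u (.inl (.inr i)) = 0 := by
    simpa [hsum, hw] using h.mul_inflexible i
  have hF : ∑ i, u (.inl (.inl i)) = 0 := by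
    simpa [Fintype.sum_sum_type, hI] using hsum
  have hφ : u (.inr (.inl ())) = 0 := by
    simpa [hF, hsum, ha, hκ] using h.mul_sum_flexible
  have hf (i : F) : u (.inl (.inl i)) = 0 := by
    simpa [hsum, hφ, hD] using h.mul_flexible i
  have hc (i : F) : u (.inr (.inr i)) = 0 := by
    refine (mul_eq_zero.1 ?_).resolve_left ha
    linear_combination -h.controller i + a * hf i
  funext j
  rcases j with (i | i) | (_ | i)
  exacts [hf i, hI i, hφ, hc i]

theorem charEq (h : IsVCSMode k w b c a g κ μ u) (hsum : ∑ j, u (.inl j) ≠ 0) :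
    μ * ((μ + w) * (μ + a) + b * μ) * (μ + w - k * ∑ i, g (.inr i)) =
      (μ + w) * (μ + a) * (k * (∑ i, g (.inl i)) * μ - (∑ i, κ i) * c) := by
  have hsplit : ∑ j, u (.inl j) = ∑ i, u (.inl (.inl i)) + ∑ i, u (.inl (.inr i)) :=
    Fintype.sum_sum_type _
  refine mul_right_cancel₀ hsum ?_
  linear_combination μ * ((μ + w) * (μ + a) + b * μ) * (μ + w) * hsplit
    + μ * (μ + w) * h.mul_sum_flexible + μ * ((μ + w) * (μ + a) + b * μ) * h.mul_sum_inflexible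
    + (μ + w) * (μ + a) * (∑ i, κ i) * h.shared

end Field

theorem re_neg {F I : Type*} [Fintype F] [Fintype I] {k w b c a : ℝ} {g : F ⊕ I → ℝ} {κ : F → ℝ}
    {μ : ℂ} {u : (F ⊕ I) ⊕ (Unit ⊕ F) → ℂ}
    (h : IsVCSMode (k : ℂ) w b c a (fun i ↦ (g i : ℂ)) (fun i ↦ (κ i : ℂ)) μ u) (hu : u ≠ 0)
    (hF : 0 ≤ k * ∑ i, g (.inl i)) (hI : 0 ≤ k * ∑ i, g (.inr i)) (hlt : k * ∑ i, g i < w)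
    (hb : 0 ≤ b) (hc : 0 < c) (hκ : 0 < ∑ i, κ i) (ha : 0 < a)
    (haI : a * (k * ∑ i, g (.inr i)) ≤ w * (w - k * ∑ i, g (.inr i))) : μ.re < 0 := by
  rw [Fintype.sum_sum_type, mul_add] at hlt
  have hw : 0 < w := by linarith
  by_cases hsum : ∑ j, u (.inl j) = 0
  · contrapose! hu
    have add_ne_zero {t : ℝ} (ht : 0 < t) : μ + t ≠ 0 := fun h0 ↦ by
      have := congrArg Complex.re h0
      simp only [Complex.add_re, Complex.ofReal_re, Complex.zero_re] at this
      linarith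
    have hD : (μ + w) * (μ + a) + b * μ ≠ 0 := fun h0 ↦ by
      refine hu.not_gt <| re_neg_of_quadratic_eq_zero (p := w + a + b) (q := w * a)
        (by positivity) (by positivity) ?_
      push_cast
      linear_combination h0
    exact h.eq_zero_of_sum_eq_zero (mod_cast hκ.ne') (add_ne_zero hw) (add_ne_zero ha) hD hsum
  · refine re_neg_of_closedLoop_charEq hF hI hlt hb (mul_pos hκ hc) ha haI ?_
    push_cast
    exact h.charEq hsum

end IsVCSMode

section Jacobian

/-- The voltage `v(g) = E g_l / (ḡ + g_l)` at the loads. -/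
noncomputable def loadVoltage {ι : Type*} [Fintype ι] (E gl : ℝ) (g : ι → ℝ) : ℝ :=
  E * gl / ((∑ j, g j) + gl)

/-- The rate `2v² / (ḡ + g_l)` at which `v²` drops as the total conductance `ḡ` grows. -/
noncomputable def voltageSqDrop {ι : Type*} [Fintype ι] (E gl : ℝ) (g : ι → ℝ) : ℝ :=
  2 * loadVoltage E gl g ^ 2 / ((∑ j, g j) + gl)

/-- The derivative `v² (g_l - ḡ) / (ḡ + g_l)` of the total consumed power `v² ḡ` with respect to
the total conductance `ḡ`. -/
noncomputable def powerSlope {ι : Type*} [Fintype ι] (E gl : ℝ) (g : ι → ℝ) : ℝ :=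
  loadVoltage E gl g ^ 2 * (gl - ∑ j, g j) / ((∑ j, g j) + gl)

section Loads

variable {ι : Type*} [Fintype ι] {E gl : ℝ} {g : ι → ℝ}

theorem powerSlope_pos (hE : E ≠ 0) (hg : 0 ≤ ∑ j, g j) (hlt : ∑ j, g j < gl) :
    0 < powerSlope E gl g := by
  have hgl : 0 < gl := hg.trans_lt hlt
  have : 0 < gl - ∑ j, g j := sub_pos.2 hlt
  unfold powerSlope loadVoltage
  positivity

theorem voltageSqDrop_nonneg (h : 0 ≤ (∑ j, g j) + gl) : 0 ≤ voltageSqDrop E gl g := by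
  unfold voltageSqDrop
  positivity

theorem loadVoltage_sq_sub_voltageSqDrop_mul_sum (h : (∑ j, g j) + gl ≠ 0) :
    loadVoltage E gl g ^ 2 - voltageSqDrop E gl g * ∑ j, g j = powerSlope E gl g := by
  unfold voltageSqDrop powerSlope
  field_simp
  ring

end Loads

theorem exists_mulVec_eq_smul_of_mem_spectrum {𝕜 n : Type*} [Field 𝕜] [Fintype n] [DecidableEq n]
    {A : Matrix n n 𝕜} {μ : 𝕜} (hμ : μ ∈ spectrum 𝕜 A) : ∃ u ≠ 0, A.mulVec u = μ • u := by
  rw [← Matrix.spectrum_toLin', ← Module.End.hasEigenvalue_iff_mem_spectrum] at hμ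
  obtain ⟨u, hu⟩ := hμ.exists_hasEigenvector
  exact ⟨u, hu.2, hu.apply_eq_smul⟩

variable {E gl a b : ℝ} {nF nI : ℕ} {P0 : Fin nF ⊕ Fin nI → ℝ} {κ : Fin nF → ℝ}
  {g : Fin nF ⊕ Fin nI → ℝ} {μ : ℂ}

-- Power balance kills the second summand of the gain `c` of the shared state.
theorem JSC_shared_load (hbal : loadVoltage E gl g ^ 2 * ∑ j, g j = ∑ j, P0 j)
    (j : Fin nF ⊕ Fin nI) :
    JSC E gl a b P0 κ g (.inr (.inl ())) (.inl j) = powerSlope E gl g ^ 2 := by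
  change powerSlope E gl g ^ 2 + (loadVoltage E gl g ^ 2 * ∑ j, g j - ∑ j, P0 j) * _ = _
  rw [hbal, sub_self, zero_mul, add_zero]

theorem isVCSMode_of_JSC_mulVec_eq_smul {u : (Fin nF ⊕ Fin nI) ⊕ (Unit ⊕ Fin nF) → ℂ}
    (hbal : loadVoltage E gl g ^ 2 * ∑ j, g j = ∑ j, P0 j)
    (hu : ((JSC E gl a b P0 κ g).map (Complex.ofReal : ℝ → ℂ)).mulVec u = μ • u) :
    IsVCSMode (voltageSqDrop E gl g : ℂ) (loadVoltage E gl g ^ 2 : ℝ) b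
      (powerSlope E gl g ^ 2 : ℝ) a (fun i ↦ (g i : ℂ)) (fun i ↦ (κ i : ℂ)) μ u := by
  have hrow (p) : ∑ q, (JSC E gl a b P0 κ g p q : ℂ) * u q = μ * u p := congrFun hu p
  constructor
  case shared =>
    rw [← hrow]
    simp only [Fintype.sum_sum_type, JSC_shared_load hbal]
    simp [JSC, mul_add, Finset.mul_sum]
  all_goals
    intro i
    rw [← hrow]
    simp only [JSC, voltageSqDrop, loadVoltage, Fintype.sum_sum_type, Finset.univ_unique,
      Finset.sum_singleton, Complex.ofReal_add, apply_ite Complex.ofReal, Complex.ofReal_zero,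
      add_mul, ite_mul, zero_mul, Finset.sum_add_distrib, Finset.sum_ite_eq, Finset.mem_univ,
      if_true, Finset.sum_const_zero, ← Finset.mul_sum, PUnit.default_eq_unit]
    push_cast
    ring

theorem stmt_15_general (hE : E ≠ 0) (hb : 0 ≤ b) (hκ : 0 < ∑ i, κ i)
    (hgF : 0 ≤ ∑ i, g (.inl i)) (hgI : 0 ≤ ∑ i, g (.inr i))
    (hbal : loadVoltage E gl g ^ 2 * ∑ j, g j = ∑ j, P0 j) (hlt : ∑ j, g j < gl)
    (ha : 0 < a) (ha_le : a ≤ powerSlope E gl g)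
    (hμ : μ ∈ spectrum ℂ ((JSC E gl a b P0 κ g).map (Complex.ofReal : ℝ → ℂ))) :
    μ.re < 0 := by
  obtain ⟨u, hu, hJu⟩ := exists_mulVec_eq_smul_of_mem_spectrum hμ
  have hg : 0 ≤ ∑ j, g j := by
    rw [Fintype.sum_sum_type]
    exact add_nonneg hgF hgI
  have hgl : 0 < (∑ j, g j) + gl := by linarith
  have hslope : 0 < powerSlope E gl g := powerSlope_pos hE hg hlt
  have hk : 0 ≤ voltageSqDrop E gl g := voltageSqDrop_nonneg hgl.le
  have hkF := mul_nonneg hk hgF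
  have hkI := mul_nonneg hk hgI
  have hsplit : voltageSqDrop E gl g * ∑ j, g j =
      voltageSqDrop E gl g * ∑ i, g (.inl i) + voltageSqDrop E gl g * ∑ i, g (.inr i) := by
    rw [Fintype.sum_sum_type, mul_add]
  have hw := loadVoltage_sq_sub_voltageSqDrop_mul_sum (E := E) hgl.ne'
  refine (isVCSMode_of_JSC_mulVec_eq_smul hbal hJu).re_neg hu hkF hkI (by linarith) hb
    (pow_pos hslope 2) hκ ha ?_
  rw [mul_comm]
  exact mul_le_mul (by linarith) (by linarith) ha.le (by positivity)

end Jacobian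

/-- Stability of the VCS controller in the underload regime: at a load satisfaction
equilibrium `g*` (where `v(g*)²·g*ᵢ = P₀ᵢ` for every load) with total conductance
`ḡ* < g_l`, there exists `a₀ > 0` such that for all `a ∈ (0, a₀)` every eigenvalue of the
VCS Jacobian `J_SC(g*)` has negative real part, i.e. the high-voltage load satisfaction
equilibrium is locally asymptotically stable. -/
theorem stmt_15 (E gl b : ℝ) (hE : 0 < E) (hgl : 0 < gl) (hb : 0 < b)
    (nF nI : ℕ) (hnF : 1 ≤ nF) (hnI : 1 ≤ nI)
    (P0 : Fin nF ⊕ Fin nI → ℝ)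
    (hP0F : ∀ i : Fin nF, 0 ≤ P0 (Sum.inl i))
    (hP0I : ∀ i : Fin nI, 0 < P0 (Sum.inr i))
    (κ : Fin nF → ℝ) (hκ : ∀ i, 0 < κ i)
    (g : Fin nF ⊕ Fin nI → ℝ) (hg : ∀ i, 0 ≤ g i)
    (heq : ∀ i, (E * gl / ((∑ j, g j) + gl)) ^ 2 * g i = P0 i)
    (hlt : (∑ i, g i) < gl) :
    ∃ a₀ > 0, ∀ a : ℝ, 0 < a → a < a₀ →
      ∀ μ ∈ spectrum ℂ ((JSC E gl a b P0 κ g).map (Complex.ofReal : ℝ → ℂ)),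
        μ.re < 0 := by
  have hgF : 0 ≤ ∑ i, g (.inl i) := Finset.sum_nonneg fun i _ ↦ hg (.inl i)
  have hgI : 0 ≤ ∑ i, g (.inr i) := Finset.sum_nonneg fun i _ ↦ hg (.inr i)
  have hκ_sum : 0 < ∑ i, κ i := Finset.sum_pos (fun i _ ↦ hκ i) ⟨⟨0, hnF⟩, Finset.mem_univ _⟩
  have hbal : loadVoltage E gl g ^ 2 * ∑ j, g j = ∑ j, P0 j := by
    rw [Finset.mul_sum]
    exact Finset.sum_congr rfl fun i _ ↦ heq i
  exact ⟨powerSlope E gl g, powerSlope_pos hE.ne' (Finset.sum_nonneg fun i _ ↦ hg i) hlt,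
    fun a ha ha_lt μ hμ ↦
      stmt_15_general hE.ne' hb.le hκ_sum hgF hgI hbal hlt ha ha_lt.le hμ⟩
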